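/- arXiv:2601.03931 — 3 statements merged into one kernel-verified Lean document; each statement's English description precedes it below -/
import Mathlib

section
/- Let q₁, q₂, c, e be nonnegative real numbers, set q_max = max{q₁, q₂}, and assume q_max < 1 and c < (1 − q_max)² / (e + 2(1 − q_max)). Then μ₁ := (q₁ + q₂ + 2c + √((q₁−q₂)² + 4c(e+c)))/2 < 1. -/
/-- For nonnegative reals `q₁, q₂, c, e` with
`q_max := max{q₁, q₂} < 1` and `c < (1 − q_max)² / (e + 2(1 − q_max))`, the larger
eigenvalue `μ₁ = (q₁ + q₂ + 2c + √((q₁−q₂)² + 4c(e+c)))/2` of the `2×2` contraction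
matrix is less than `1`. -/
theorem larger_eigenvalue_lt_one (q₁ q₂ c e : ℝ)
    (hq₁ : 0 ≤ q₁) (hq₂ : 0 ≤ q₂) (hc : 0 ≤ c) (he : 0 ≤ e)
    (hqmax : max q₁ q₂ < 1)
    (hcsmall : c < (1 - max q₁ q₂) ^ 2 / (e + 2 * (1 - max q₁ q₂))) :
    (q₁ + q₂ + 2 * c + Real.sqrt ((q₁ - q₂) ^ 2 + 4 * c * (e + c))) / 2 < 1 := by
  have h1 := le_max_left q₁ q₂
  have h2 := le_max_right q₁ q₂
  generalize max q₁ q₂ = m at *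
  obtain ⟨d, rfl⟩ : ∃ d, m = 1 - d := ⟨1 - m, by ring⟩
  obtain ⟨s, rfl⟩ : ∃ s, q₁ = 1 - d - s := ⟨1 - d - q₁, by ring⟩
  obtain ⟨t, rfl⟩ : ∃ t, q₂ = 1 - d - t := ⟨1 - d - q₂, by ring⟩
  have hd : 0 < d := by linarith
  have hs : 0 ≤ s := by linarith
  have ht : 0 ≤ t := by linarith
  have h : c * (e + 2 * d) < d ^ 2 := by
    rw [lt_div_iff₀ (by linarith)] at hcsmall
    linarith
  have hce : 0 ≤ c * e := mul_nonneg hc he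
  have hcd : 2 * c < d := by
    by_contra hn
    push Not at hn
    nlinarith [mul_le_mul_of_nonneg_left hn hd.le]
  have hst : 0 ≤ s * t := mul_nonneg hs ht
  have h3 : 0 ≤ (d - c) * (s + t) := mul_nonneg (by linarith) (by linarith)
  have : Real.sqrt ((1 - d - s - (1 - d - t)) ^ 2 + 4 * c * (e + c)) < 2 * d + s + t - 2 * c := by
    rw [Real.sqrt_lt' (by linarith)]
    nlinarith
  linarith
end

section
/- Let A be a 2×2 real matrix with all entries nonnegative, and let μ₁, μ₂ be real numbers with 0 < μ₂ < μ₁ < 1, trace(A) = μ₁ + μ₂, and det(A) = μ₁·μ₂ (so μ₁, μ₂ are the eigenvalues of A). Let v ∈ ℝ² have nonnegative entries. Then for every natural number t ≥ 1 and each index i ∈ {1,2}, the i-th entry of A^t·v satisfies (A^t·v)ᵢ ≤ max{μ₁²/(μ₁−μ₂), 1} · (A·v)ᵢ. -/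
open Matrix

/-- Let `A` be a `2×2` real matrix with nonnegative entries whose
eigenvalues `μ₁, μ₂` satisfy `0 < μ₂ < μ₁ < 1` (expressed via `trace A = μ₁ + μ₂` and
`det A = μ₁·μ₂`), and let `v ∈ ℝ²` have nonnegative entries. Then for every `t ≥ 1` and
each index `i`, `(A^t·v)ᵢ ≤ max{μ₁²/(μ₁−μ₂), 1} · (A·v)ᵢ`. -/
theorem matrix_power_entrywise_bound (A : Matrix (Fin 2) (Fin 2) ℝ)
    (hA : ∀ i j, 0 ≤ A i j)
    (μ₁ μ₂ : ℝ) (hμ₂pos : 0 < μ₂) (hμ₂₁ : μ₂ < μ₁) (hμ₁lt : μ₁ < 1)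
    (htr : A.trace = μ₁ + μ₂) (hdet : A.det = μ₁ * μ₂)
    (v : Fin 2 → ℝ) (hv : ∀ i, 0 ≤ v i)
    (t : ℕ) (ht : 1 ≤ t) (i : Fin 2) :
    ((A ^ t) *ᵥ v) i ≤ max (μ₁ ^ 2 / (μ₁ - μ₂)) 1 * (A *ᵥ v) i := by
  have hd : 0 < μ₁ - μ₂ := sub_pos.2 hμ₂₁
  have hμ₁pos : 0 < μ₁ := hμ₂pos.trans hμ₂₁
  have hsq : A * A = (μ₁ + μ₂) • A - (μ₁ * μ₂) • (1 : Matrix (Fin 2) (Fin 2) ℝ) := by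
    rw [← htr, ← hdet]
    ext i j
    fin_cases i <;> fin_cases j <;>
      simp [Matrix.mul_apply, Fin.sum_univ_two, Matrix.trace_fin_two, Matrix.det_fin_two] <;> ring
  have key : ∀ n : ℕ, (μ₁ - μ₂) • A ^ (n + 1) = (μ₁ ^ (n + 1) - μ₂ ^ (n + 1)) • A
      - (μ₁ * μ₂ * (μ₁ ^ n - μ₂ ^ n)) • (1 : Matrix (Fin 2) (Fin 2) ℝ) := by
    intro n
    induction n with
    | zero => simp
    | succ k ih =>
      rw [pow_succ A (k + 1), ← smul_mul_assoc, ih, sub_mul, smul_mul_assoc, smul_mul_assoc,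
        hsq, one_mul]
      module
  obtain ⟨n, rfl⟩ : ∃ n, t = n + 1 := ⟨t - 1, by omega⟩
  have hAv : 0 ≤ (A *ᵥ v) i := by
    simp only [Matrix.mulVec, dotProduct]
    exact Finset.sum_nonneg fun j _ => mul_nonneg (hA i j) (hv j)
  have hk : (μ₁ - μ₂) * ((A ^ (n + 1)) *ᵥ v) i = (μ₁ ^ (n + 1) - μ₂ ^ (n + 1)) * (A *ᵥ v) i
      - (μ₁ * μ₂ * (μ₁ ^ n - μ₂ ^ n)) * v i := by
    have := congrFun (congrArg (fun M => M *ᵥ v) (key n)) i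
    simpa only [Matrix.sub_mulVec, Matrix.smul_mulVec, Matrix.one_mulVec, Pi.sub_apply,
      Pi.smul_apply, smul_eq_mul] using this
  rcases Nat.eq_zero_or_pos n with rfl | hn
  · simpa using mul_le_mul_of_nonneg_right (le_max_right (μ₁ ^ 2 / (μ₁ - μ₂)) 1) hAv
  · refine le_trans ?_ (mul_le_mul_of_nonneg_right (le_max_left _ _) hAv)
    rw [div_mul_eq_mul_div, le_div_iff₀ hd, mul_comm, hk]
    have h1 : μ₂ ^ n ≤ μ₁ ^ n := pow_le_pow_left₀ hμ₂pos.le hμ₂₁.le n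
    have h2 : 0 ≤ (μ₁ * μ₂ * (μ₁ ^ n - μ₂ ^ n)) * v i :=
      mul_nonneg (mul_nonneg (by positivity) (sub_nonneg.2 h1)) (hv i)
    have h3 : μ₁ ^ (n + 1) ≤ μ₁ ^ 2 := pow_le_pow_of_le_one hμ₁pos.le hμ₁lt.le (by omega)
    have h4 : 0 < μ₂ ^ (n + 1) := by positivity
    have h5 : (μ₁ ^ (n + 1) - μ₂ ^ (n + 1)) * (A *ᵥ v) i ≤ μ₁ ^ 2 * (A *ᵥ v) i :=
      mul_le_mul_of_nonneg_right (by linarith) hAv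
    linarith
end

section
/- Let c : ℝⁿ → ℝ^q be twice continuously differentiable, and for y ∈ ℝⁿ let J(y) denote the q×n Jacobian matrix of c at y (so J(y)ᵢⱼ = ∂cᵢ/∂yⱼ(y)). Let x ∈ ℝⁿ be such that J(x)·J(x)ᵀ is invertible, let u ∈ ℝⁿ, and let v ∈ ℝⁿ satisfy J(x)·v = 0. Then the map y ↦ (Iₙ − J(y)ᵀ·(J(y)·J(y)ᵀ)⁻¹·J(y))·v is differentiable at x, and its derivative at x in the direction u equals −J(x)ᵀ·(J(x)·J(x)ᵀ)⁻¹·(D_uJ(x))·v, where D_uJ(x) is the q×n matrix obtained as the directional derivative of y ↦ J(y) at x along u (whose i-th row is uᵀ·∇²cᵢ(x)). -/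
open Matrix

theorem det_diff_aux {n q : ℕ} (M : (Fin n → ℝ) → Matrix (Fin q) (Fin q) ℝ) (x : Fin n → ℝ)
    (h : ∀ i j, DifferentiableAt ℝ (fun y => M y i j) x) :
    DifferentiableAt ℝ (fun y => (M y).det) x := by
  simp only [Matrix.det_apply']
  refine DifferentiableAt.fun_sum fun σ _ => ?_
  refine DifferentiableAt.const_mul ?_ _
  exact (HasFDerivAt.finsetProd (g := fun i y => M y (σ i) i)
    (fun i _ => (h (σ i) i).hasFDerivAt)).differentiableAt

theorem inv_diff_aux {n q : ℕ} (M : (Fin n → ℝ) → Matrix (Fin q) (Fin q) ℝ) (x : Fin n → ℝ)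
    (h : ∀ i j, DifferentiableAt ℝ (fun y => M y i j) x) (hu : IsUnit (M x)) (i j : Fin q) :
    DifferentiableAt ℝ (fun y => (M y)⁻¹ i j) x := by
  have hd : (M x).det ≠ 0 := ((Matrix.isUnit_iff_isUnit_det _).1 hu).ne_zero
  simp only [Matrix.inv_def, Matrix.smul_apply, Ring.inverse_eq_inv', smul_eq_mul,
    Matrix.adjugate_apply]
  refine DifferentiableAt.mul ((det_diff_aux M x h).inv hd) (det_diff_aux _ x fun a b => ?_)
  by_cases hab : a = j
  · subst hab
    simp
  · simpa [Matrix.updateRow_ne hab] using h a b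


/-- Let `c : ℝⁿ → ℝ^q` be twice continuously differentiable with
Jacobian matrix `J(y)` (so `J(y)ᵢⱼ = ∂cᵢ/∂yⱼ(y)`). Let `x` be such that `J(x)·J(x)ᵀ` is
invertible, let `u ∈ ℝⁿ`, and let `v ∈ ℝⁿ` with `J(x)·v = 0` (a tangent vector). Then
the map `y ↦ (Iₙ − J(y)ᵀ(J(y)J(y)ᵀ)⁻¹J(y))·v` (the tangent-space projector applied to
`v`) is differentiable at `x`, and its derivative at `x` in direction `u` equals
`−J(x)ᵀ(J(x)J(x)ᵀ)⁻¹(D_u J(x))·v`, where `D_u J(x)` is the directional derivative of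
`y ↦ J(y)` at `x` along `u` (taken entrywise). -/
theorem second_fundamental_form_level_set {n q : ℕ}
    (c : (Fin n → ℝ) → (Fin q → ℝ)) (hc : ContDiff ℝ 2 c)
    (J : (Fin n → ℝ) → Matrix (Fin q) (Fin n) ℝ)
    (hJ : ∀ y i j, J y i j = fderiv ℝ (fun z => c z i) y (Pi.single j 1))
    (x : Fin n → ℝ) (hinv : IsUnit (J x * (J x)ᵀ))
    (u v : Fin n → ℝ) (hv : J x *ᵥ v = 0) :
    DifferentiableAt ℝ
      (fun y => ((1 : Matrix (Fin n) (Fin n) ℝ) - (J y)ᵀ * (J y * (J y)ᵀ)⁻¹ * J y) *ᵥ v) x ∧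
    fderiv ℝ
      (fun y => ((1 : Matrix (Fin n) (Fin n) ℝ) - (J y)ᵀ * (J y * (J y)ᵀ)⁻¹ * J y) *ᵥ v) x u =
      -(((J x)ᵀ * (J x * (J x)ᵀ)⁻¹ *
          Matrix.of (fun i j => fderiv ℝ (fun y => J y i j) x u)) *ᵥ v) := by
  have hJd : ∀ i j, DifferentiableAt ℝ (fun y => J y i j) x := by
    intro i j
    simp only [hJ]
    have h1 : ContDiff ℝ 2 (fun z => c z i) := contDiff_pi.1 hc i
    have h2 : ContDiff ℝ 1 (fderiv ℝ (fun z => c z i)) := h1.fderiv_right (by norm_num)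
    exact ((h2.differentiable (by norm_num)) x).clm_apply (differentiableAt_const _)
  have hG : ∀ i j, DifferentiableAt ℝ (fun y => (J y * (J y)ᵀ)⁻¹ i j) x := by
    refine inv_diff_aux (fun y => J y * (J y)ᵀ) x (fun i j => ?_) hinv
    simp only [Matrix.mul_apply, Matrix.transpose_apply]
    exact DifferentiableAt.fun_sum fun k _ => (hJd i k).mul (hJd j k)
  have hA : ∀ i k, DifferentiableAt ℝ (fun y => ((J y)ᵀ * (J y * (J y)ᵀ)⁻¹) i k) x := by
    intro i k
    simp only [Matrix.mul_apply (M := (J _)ᵀ), Matrix.transpose_apply (J _)]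
    exact DifferentiableAt.fun_sum fun l _ => (hJd l i).mul (hG l k)
  have hw : ∀ k, HasFDerivAt (fun y => (J y *ᵥ v) k)
      (∑ j, v j • fderiv ℝ (fun y => J y k j) x) x := by
    intro k
    simp only [Matrix.mulVec, dotProduct]
    exact HasFDerivAt.fun_sum fun j _ => (hJd k j).hasFDerivAt.mul_const (v j)
  have hf : ∀ i, HasFDerivAt (fun y => (((1 : Matrix (Fin n) (Fin n) ℝ)
      - (J y)ᵀ * (J y * (J y)ᵀ)⁻¹ * J y) *ᵥ v) i)
      (-∑ k, ((J x)ᵀ * (J x * (J x)ᵀ)⁻¹) i k • ∑ j, v j • fderiv ℝ (fun y => J y k j) x) x := by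
    intro i
    have e : (fun y => (((1 : Matrix (Fin n) (Fin n) ℝ)
        - (J y)ᵀ * (J y * (J y)ᵀ)⁻¹ * J y) *ᵥ v) i) = fun y => v i -
        ∑ k, ((J y)ᵀ * (J y * (J y)ᵀ)⁻¹) i k * (J y *ᵥ v) k := by
      funext y
      rw [Matrix.sub_mulVec, Matrix.one_mulVec, ← Matrix.mulVec_mulVec]
      rfl
    rw [e]
    refine HasFDerivAt.const_sub (HasFDerivAt.fun_sum fun k _ => ?_) _
    have := (hA i k).hasFDerivAt.mul (hw k)
    simp only [hv, Pi.zero_apply, zero_smul, add_zero] at this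
    exact this
  have hF := hasFDerivAt_pi.2 hf
  refine ⟨hF.differentiableAt, ?_⟩
  rw [hF.fderiv, ← Matrix.mulVec_mulVec]
  ext i
  simp only [ContinuousLinearMap.coe_pi', _root_.neg_apply,
    _root_.sum_apply, _root_.smul_apply, smul_eq_mul, Pi.neg_apply]
  rw [Matrix.mulVec, dotProduct]
  simp only [Matrix.mulVec, dotProduct, Matrix.of_apply, mul_comm (v _)]
end
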